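/- Assume the string equation hypothesis holds for F_0, …, F_g. Then for all integers s ≥ 0, m ≥ 1, every primary coordinate entry W = τ_0(γ_x), and all coordinate entries V_1, …, V_s, one has Ψ_{2,s,g,m}(W S | V_1 ⋯ V_s) = −Ψ_{1,s,g,m−1}(W | V_1 ⋯ V_s), where the entry S is expanded by R-multilinearity of Ψ. -/

import Mathlib

/-! Differentiating the string equation shows that inserting `S` into a bracket lowers each of its
other entries in turn, up to the corresponding bracket of the quadratic term of the equation. When
`S` is inserted into `Ψ_m`, lowering the contracted entry `τ_k(γ_α)` re-indexes the convolution by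
`k ↦ k - 1`, which turns it into minus the convolution of `Ψ_{m-1}`; lowering the raised entry of a
boundary term has the same effect, and lowering the `W_i` gives `Ψ_m` with `τ_-` applied to `W_i`.
The quadratic term has nonzero brackets with two entries only for two primaries in genus `0`;
contracting it with `η^{αβ}` yields `⟨⟨τ_m(W) V_1 ⋯ V_s⟩⟩_g` for a single primary entry `W`. This is
the boundary term that `Ψ_m` still contains at `τ_-(W) = τ_{-1}(γ_x)`, so the two cancel and only
`-Ψ_{m-1}` survives. -/

open scoped BigOperators

namespace GWBigPhase

/-- The big phase space coefficient ring: formal power series over `ℚ` in the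
variables `t_n^α`, indexed by pairs `(n, α) : ℕ × Fin N`. -/
abbrev R (N : ℕ) : Type := MvPowerSeries (ℕ × Fin N) ℚ

/-- Partial derivative of a multivariate power series with respect to the
variable indexed by `i`. -/
noncomputable def pderiv (N : ℕ) (i : ℕ × Fin N) (f : R N) : R N :=
  fun e => ((e i : ℚ) + 1) * MvPowerSeries.coeff (R := ℚ) (e + Finsupp.single i 1) f

/-- Coefficientwise (formally convergent) sum of a family of power series. -/
noncomputable def seriesSum (N : ℕ) (f : ℕ × Fin N → R N) : R N :=
  fun e => ∑ᶠ p : ℕ × Fin N, MvPowerSeries.coeff (R := ℚ) e (f p)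

/-- The bracket `⟨⟨τ_{n_1}(γ_{α_1}) ⋯ τ_{n_k}(γ_{α_k})⟩⟩_h`: iterated partial
derivative of `F h`, and `0` whenever some descendent level is negative. -/
noncomputable def Bracket (N : ℕ) (F : ℕ → R N) (h : ℕ) : List (ℤ × Fin N) → R N
  | [] => F h
  | (n, α) :: L => if 0 ≤ n then pderiv N (n.toNat, α) (Bracket N F h L) else 0

/-- `t̃_n^α = t_n^α − δ_{α,1} δ_{n,1}` (the distinguished index `1` is `0 : Fin N`). -/
noncomputable def ttilde (N : ℕ) [NeZero N] (n : ℕ) (α : Fin N) : R N :=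
  MvPowerSeries.X (n, α) - if n = 1 ∧ α = 0 then 1 else 0

/-- Interpret a list of coordinate entries `τ_n(γ_α)` with `n : ℕ` as entries
with integer descendent levels. -/
def coordList (N : ℕ) (L : List (ℕ × Fin N)) : List (ℤ × Fin N) :=
  L.map (fun p => ((p.1 : ℤ), p.2))

/-- Lower the descendent level of the `i`-th entry of a list by one (the
operator `τ_-` applied in the `i`-th slot). -/
def lowerAt (N : ℕ) (L : List (ℤ × Fin N)) (i : ℕ) : List (ℤ × Fin N) :=
  L.mapIdx (fun j p => if j = i then (p.1 - 1, p.2) else p)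

/-- The quantity `Ψ_{r,s,g,m}(W_1 ⋯ W_r | V_1 ⋯ V_s)`, where `r = Ws.length`
and `s = Vs.length`. -/
noncomputable def Psi (N : ℕ) [NeZero N] (ηinv : Matrix (Fin N) (Fin N) ℚ)
    (F : ℕ → R N) (g m : ℕ) (Ws Vs : List (ℤ × Fin N)) : R N :=
  (∑ k ∈ Finset.range (m + 1), ∑ g1 ∈ Finset.range (g + 1),
      ∑ α : Fin N, ∑ β : Fin N,
        (-1 : R N) ^ k * MvPowerSeries.C (σ := ℕ × Fin N) (R := ℚ) (ηinv α β) *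
          Bracket N F g1 (((k : ℤ), α) :: Ws) *
          Bracket N F (g - g1) ((((m - k : ℕ) : ℤ), β) :: Vs))
  - (match Ws with
     | [] => seriesSum N (fun p =>
         ttilde N p.1 p.2 * Bracket N F g (((p.1 : ℤ) + (m : ℤ) + 1, p.2) :: Vs))
     | [w] => Bracket N F g ((w.1 + (m : ℤ) + 1, w.2) :: Vs)
     | _ => 0)
  + (-1 : R N) ^ (m + 1) *
    (match Vs with
     | [] => seriesSum N (fun p =>
         ttilde N p.1 p.2 * Bracket N F g (((p.1 : ℤ) + (m : ℤ) + 1, p.2) :: Ws))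
     | [v] => Bracket N F g (Ws ++ [(v.1 + (m : ℤ) + 1, v.2)])
     | _ => 0)

/-- `Ψ_{r+1,s,g,m}(W_1 ⋯ W_r S | V_1 ⋯ V_s)`: the value of `Ψ` with the string
vector field `S = −Σ_{n,α} t̃_n^α τ_{n−1}(γ_α)` inserted as the last `W`-entry,
expanded by `R`-multilinearity of `Ψ`. -/
noncomputable def PsiS (N : ℕ) [NeZero N] (ηinv : Matrix (Fin N) (Fin N) ℚ)
    (F : ℕ → R N) (g m : ℕ) (Ws Vs : List (ℤ × Fin N)) : R N :=
  - seriesSum N (fun p =>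
      ttilde N p.1 p.2 * Psi N ηinv F g m (Ws ++ [((p.1 : ℤ) - 1, p.2)]) Vs)

/-- The string equation hypothesis for `F_0, …, F_g`. -/
def StringEqHyp (N : ℕ) [NeZero N] (η : Matrix (Fin N) (Fin N) ℚ)
    (F : ℕ → R N) (g : ℕ) : Prop :=
  ∀ h : ℕ, h ≤ g →
    pderiv N ((0 : ℕ), (0 : Fin N)) (F h) =
      seriesSum N (fun p => MvPowerSeries.X (p.1 + 1, p.2) * pderiv N p (F h)) +
      (if h = 0 then
        MvPowerSeries.C (σ := ℕ × Fin N) (R := ℚ) (1 / 2) *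
          ∑ α : Fin N, ∑ β : Fin N,
            MvPowerSeries.C (σ := ℕ × Fin N) (R := ℚ) (η α β) *
              MvPowerSeries.X ((0 : ℕ), α) * MvPowerSeries.X ((0 : ℕ), β)
       else 0)

open MvPowerSeries

theorem mvPowerSeries_pderiv_comm {σ A : Type*} [CommSemiring A] (i j : σ)
    (f : MvPowerSeries σ A) :
    MvPowerSeries.pderiv A i (MvPowerSeries.pderiv A j f) =
      MvPowerSeries.pderiv A j (MvPowerSeries.pderiv A i f) := by
  classical
  ext e
  simp only [MvPowerSeries.coeff_pderiv]
  rw [add_right_comm e]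
  obtain rfl | hij := eq_or_ne i j
  · rfl
  · simp only [Finsupp.add_apply, Finsupp.single_eq_of_ne hij, Finsupp.single_eq_of_ne hij.symm,
      add_zero]
    ring

theorem coeff_X_mul_of_eq_zero {σ A : Type*} [CommSemiring A] {i : σ} {e : σ →₀ ℕ}
    (h : e i = 0) (f : MvPowerSeries σ A) : coeff e (X i * f) = 0 :=
  X_dvd_iff.1 (dvd_mul_right _ _) e h

section Brackets

variable {N : ℕ} (F : ℕ → R N) (h : ℕ)

theorem pderiv_eq_mvPowerSeries_pderiv (i : ℕ × Fin N) (f : R N) :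
    pderiv N i f = MvPowerSeries.pderiv ℚ i f := by
  ext e
  rw [MvPowerSeries.coeff_pderiv, mul_comm]
  rfl

theorem bracket_natCast_cons (n : ℕ) (a : Fin N) (L : List (ℤ × Fin N)) :
    Bracket N F h (((n : ℤ), a) :: L) = MvPowerSeries.pderiv ℚ (n, a) (Bracket N F h L) := by
  simp [Bracket, pderiv_eq_mvPowerSeries_pderiv]

theorem bracket_singleton (n : ℕ) (a : Fin N) :
    Bracket N F h [((n : ℤ), a)] = MvPowerSeries.pderiv ℚ (n, a) (F h) :=
  bracket_natCast_cons F h n a []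

theorem bracket_cons_of_neg {n : ℤ} (hn : n < 0) (a : Fin N) (L : List (ℤ × Fin N)) :
    Bracket N F h ((n, a) :: L) = 0 := by
  simp [Bracket, hn.not_ge]

variable {F h} in
theorem bracket_append_eq_zero {L : List (ℤ × Fin N)} (hL : Bracket N F h L = 0)
    (L' : List (ℤ × Fin N)) : Bracket N F h (L' ++ L) = 0 := by
  induction L' with
  | nil => exact hL
  | cons a L' ih => simp [Bracket, ih, pderiv_eq_mvPowerSeries_pderiv]

theorem bracket_swap (a b : ℤ × Fin N) (L : List (ℤ × Fin N)) :
    Bracket N F h (a :: b :: L) = Bracket N F h (b :: a :: L) := by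
  simp only [Bracket, pderiv_eq_mvPowerSeries_pderiv]
  split_ifs
  · exact mvPowerSeries_pderiv_comm _ _ _
  all_goals simp

variable {F h} in
theorem bracket_perm {L L' : List (ℤ × Fin N)} (hL : L.Perm L') :
    Bracket N F h L = Bracket N F h L' := by
  induction hL with
  | nil => rfl
  | cons a _ ih => simp only [Bracket, ih]
  | swap a b L => exact bracket_swap F h b a L
  | trans _ _ ih₁ ih₂ => exact ih₁.trans ih₂

theorem bracket_append_singleton (L : List (ℤ × Fin N)) (a : ℤ × Fin N) :
    Bracket N F h (L ++ [a]) = Bracket N F h (a :: L) :=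
  bracket_perm (List.perm_append_singleton a L)

end Brackets

section Lowering

variable {N : ℕ}

theorem coordList_nil : coordList N [] = [] :=
  rfl

theorem coordList_cons (v : ℕ × Fin N) (L : List (ℕ × Fin N)) :
    coordList N (v :: L) = ((v.1 : ℤ), v.2) :: coordList N L :=
  rfl

theorem length_coordList (L : List (ℕ × Fin N)) : (coordList N L).length = L.length :=
  List.length_map _

theorem length_lowerAt (L : List (ℤ × Fin N)) (i : ℕ) : (lowerAt N L i).length = L.length :=
  List.length_mapIdx

theorem lowerAt_cons_zero (a : ℤ × Fin N) (L : List (ℤ × Fin N)) :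
    lowerAt N (a :: L) 0 = (a.1 - 1, a.2) :: L := by
  refine List.ext_getElem (by simp [lowerAt]) fun i _ _ => ?_
  cases i <;> simp [lowerAt]

theorem lowerAt_cons_succ (a : ℤ × Fin N) (L : List (ℤ × Fin N)) (i : ℕ) :
    lowerAt N (a :: L) (i + 1) = a :: lowerAt N L i := by
  simp [lowerAt, List.mapIdx_cons]

theorem sum_lowerAt_cons {M : Type*} [AddCommMonoid M] (f : List (ℤ × Fin N) → M)
    (a : ℤ × Fin N) (L : List (ℤ × Fin N)) :
    ∑ i ∈ Finset.range (L.length + 1), f (lowerAt N (a :: L) i) =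
      f ((a.1 - 1, a.2) :: L) + ∑ i ∈ Finset.range L.length, f (a :: lowerAt N L i) := by
  simp only [Finset.sum_range_succ', lowerAt_cons_zero, lowerAt_cons_succ, add_comm]

end Lowering

section FormalSums

variable {N : ℕ}

theorem coeff_seriesSum (f : ℕ × Fin N → R N) (e : ℕ × Fin N →₀ ℕ) :
    coeff e (seriesSum N f) = ∑ᶠ p, coeff e (f p) :=
  rfl

theorem coeff_seriesSum_eq_sum {f : ℕ × Fin N → R N} {e : ℕ × Fin N →₀ ℕ}
    {T : Finset (ℕ × Fin N)} (hT : ∀ p ∉ T, coeff e (f p) = 0) :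
    coeff e (seriesSum N f) = ∑ p ∈ T, coeff e (f p) :=
  finsum_eq_sum_of_support_subset _ fun p hp => by
    by_contra h
    exact hp (hT p h)

theorem seriesSum_comp_of_injective {u : ℕ × Fin N → ℕ × Fin N} (hu : Function.Injective u)
    {f : ℕ × Fin N → R N} (hf : ∀ p ∉ Set.range u, f p = 0) :
    seriesSum N (fun p => f (u p)) = seriesSum N f := by
  ext e
  have hsupp : (Function.support fun p => coeff e (f p)) ⊆ Set.range u := fun p hp => by
    by_contra h
    exact hp (by simp [hf p h])
  rw [coeff_seriesSum, coeff_seriesSum, ← finsum_mem_range hu (f := fun p => coeff e (f p)),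
    finsum_mem_def, Set.indicator_eq_self.2 hsupp]

end FormalSums

section DilatonShiftedSums

variable {N : ℕ} [NeZero N]

/-- The finitely many indices `p` for which `t̃_p G_p` may contribute to the coefficient of the
monomial with exponent `e`: those occurring in `e`, and that of the dilaton shift. -/
def ttildeSupport (e : ℕ × Fin N →₀ ℕ) : Finset (ℕ × Fin N) :=
  insert (1, 0) e.support

theorem ttildeSupport_mono {d e : ℕ × Fin N →₀ ℕ} (hde : d ≤ e) :
    ttildeSupport d ⊆ ttildeSupport e :=
  Finset.insert_subset_insert _ (Finsupp.support_mono hde)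

theorem coeff_ttilde_mul_of_notMem {e : ℕ × Fin N →₀ ℕ} {p : ℕ × Fin N}
    (hp : p ∉ ttildeSupport e) (f : R N) : coeff e (ttilde N p.1 p.2 * f) = 0 := by
  rw [ttildeSupport, Finset.mem_insert, not_or, Finsupp.notMem_support_iff] at hp
  have hshift : ¬(p.1 = 1 ∧ p.2 = 0) := fun h => hp.1 (Prod.ext h.1 h.2)
  rw [ttilde, if_neg hshift, sub_zero, coeff_X_mul_of_eq_zero hp.2]

theorem coeff_seriesSum_ttilde_mul (G : ℕ × Fin N → R N) {e : ℕ × Fin N →₀ ℕ}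
    {T : Finset (ℕ × Fin N)} (hT : ttildeSupport e ⊆ T) :
    coeff e (seriesSum N fun p => ttilde N p.1 p.2 * G p) =
      ∑ p ∈ T, coeff e (ttilde N p.1 p.2 * G p) :=
  coeff_seriesSum_eq_sum fun _ hp => coeff_ttilde_mul_of_notMem (fun h => hp (hT h)) _

theorem seriesSum_ttilde_mul_smul (c : R N) (G : ℕ × Fin N → R N) :
    seriesSum N (fun p => ttilde N p.1 p.2 * (c * G p)) =
      c * seriesSum N fun p => ttilde N p.1 p.2 * G p := by
  classical
  ext e
  calc coeff e (seriesSum N fun p => ttilde N p.1 p.2 * (c * G p))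
      = ∑ p ∈ ttildeSupport e, ∑ d ∈ Finset.HasAntidiagonal.antidiagonal e,
          coeff d.1 c * coeff d.2 (ttilde N p.1 p.2 * G p) := by
        rw [coeff_seriesSum_ttilde_mul _ subset_rfl]
        exact Finset.sum_congr rfl fun p _ => by rw [mul_left_comm, coeff_mul]
    _ = ∑ d ∈ Finset.HasAntidiagonal.antidiagonal e, coeff d.1 c *
          coeff d.2 (seriesSum N fun p => ttilde N p.1 p.2 * G p) := by
        rw [Finset.sum_comm]
        refine Finset.sum_congr rfl fun d hd => ?_
        have hle : d.2 ≤ e := Finset.HasAntidiagonal.mem_antidiagonal.1 hd ▸ le_add_self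
        rw [coeff_seriesSum_ttilde_mul _ (ttildeSupport_mono hle), Finset.mul_sum]
    _ = coeff e (c * seriesSum N fun p => ttilde N p.1 p.2 * G p) := (coeff_mul _ _ _).symm

/-- The formal sum `Σ_{n,α} t̃_n^α G_{n,α}`, as an `R`-linear map of the family `G`. Inserting the
string vector field `S` into a slot is `-ttildeSum` over the entries `τ_{n-1}(γ_α)`. -/
noncomputable def ttildeSum : (ℕ × Fin N → R N) →ₗ[R N] R N where
  toFun G := seriesSum N fun p => ttilde N p.1 p.2 * G p
  map_add' G H := by
    ext e
    rw [map_add]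
    simp only [coeff_seriesSum_ttilde_mul _ (subset_refl (ttildeSupport e)),
      ← Finset.sum_add_distrib]
    exact Finset.sum_congr rfl fun p _ => by rw [Pi.add_apply, mul_add, map_add]
  map_smul' := seriesSum_ttilde_mul_smul

theorem coeff_ttildeSum (G : ℕ × Fin N → R N) {e : ℕ × Fin N →₀ ℕ}
    {T : Finset (ℕ × Fin N)} (hT : ttildeSupport e ⊆ T) :
    coeff e (ttildeSum G) = ∑ p ∈ T, coeff e (ttilde N p.1 p.2 * G p) :=
  coeff_seriesSum_ttilde_mul G hT

theorem ttildeSum_sum {ι : Type*} (s : Finset ι) (G : ι → ℕ × Fin N → R N) :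
    ttildeSum (fun p => ∑ a ∈ s, G a p) = ∑ a ∈ s, ttildeSum (G a) := by
  rw [← map_sum, Finset.sum_fn]

theorem ttildeSum_mul_left (c : R N) (G : ℕ × Fin N → R N) :
    ttildeSum (fun p => c * G p) = c * ttildeSum G :=
  map_smul ttildeSum c G

theorem ttildeSum_mul_right (c : R N) (G : ℕ × Fin N → R N) :
    ttildeSum (fun p => G p * c) = ttildeSum G * c := by
  simpa only [mul_comm] using ttildeSum_mul_left c G

theorem ttildeSum_comm (G : ℕ × Fin N → ℕ × Fin N → R N) :
    ttildeSum (fun p => ttildeSum (G p)) = ttildeSum fun q => ttildeSum fun p => G p q := by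
  have hcoeff (H : ℕ × Fin N → ℕ × Fin N → R N) (e : ℕ × Fin N →₀ ℕ) :
      coeff e (ttildeSum fun p => ttildeSum (H p)) =
        ∑ p ∈ ttildeSupport e, ∑ q ∈ ttildeSupport e,
          coeff e (ttilde N p.1 p.2 * ttilde N q.1 q.2 * H p q) := by
    rw [coeff_ttildeSum _ subset_rfl]
    refine Finset.sum_congr rfl fun p _ => ?_
    rw [← ttildeSum_mul_left, coeff_ttildeSum _ subset_rfl]
    simp only [mul_left_comm, mul_assoc]
  ext e
  rw [hcoeff, hcoeff fun q p => G p q, Finset.sum_comm]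
  simp only [mul_comm (ttilde N _ _) (ttilde N _ _)]

theorem pderiv_ttilde (i p : ℕ × Fin N) :
    MvPowerSeries.pderiv ℚ i (ttilde N p.1 p.2) = if i = p then 1 else 0 := by
  have hconst : MvPowerSeries.pderiv ℚ i (if p.1 = 1 ∧ p.2 = 0 then 1 else 0 : R N) = 0 := by
    split_ifs <;> simp
  rw [ttilde, map_sub, hconst, sub_zero, MvPowerSeries.pderiv_X, Pi.single_apply]
  simp only [eq_comm]

theorem pderiv_ttildeSum (i : ℕ × Fin N) (G : ℕ × Fin N → R N) :
    MvPowerSeries.pderiv ℚ i (ttildeSum G) =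
      ttildeSum (fun p => MvPowerSeries.pderiv ℚ i (G p)) + G i := by
  ext e
  set e' := e + Finsupp.single i 1
  have hi : i ∈ ttildeSupport e' := Finset.mem_insert_of_mem (by simp [e'])
  have hleibniz (p : ℕ × Fin N) :
      MvPowerSeries.pderiv ℚ i (ttilde N p.1 p.2 * G p) =
        ttilde N p.1 p.2 * MvPowerSeries.pderiv ℚ i (G p) + if i = p then G p else 0 := by
    rw [Derivation.leibniz, pderiv_ttilde]
    split_ifs <;> simp
  calc coeff e (MvPowerSeries.pderiv ℚ i (ttildeSum G))
      = ∑ p ∈ ttildeSupport e',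
          coeff e (MvPowerSeries.pderiv ℚ i (ttilde N p.1 p.2 * G p)) := by
        simp only [MvPowerSeries.coeff_pderiv, coeff_ttildeSum _ (subset_refl (ttildeSupport e')),
          Finset.sum_mul, e']
    _ = ∑ p ∈ ttildeSupport e', coeff e (ttilde N p.1 p.2 * MvPowerSeries.pderiv ℚ i (G p)) +
          coeff e (G i) := by
        simp only [hleibniz, map_add, Finset.sum_add_distrib, ← map_sum, Finset.sum_ite_eq, hi,
          if_true]
    _ = coeff e (ttildeSum (fun p => MvPowerSeries.pderiv ℚ i (G p)) + G i) := by
        rw [map_add, coeff_ttildeSum _ (ttildeSupport_mono le_self_add)]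

theorem ttildeSum_eq_seriesSum_X_mul_sub (G : ℕ × Fin N → R N) :
    ttildeSum G = seriesSum N (fun p => X p * G p) - G (1, 0) := by
  ext e
  have hX : coeff e (seriesSum N fun p => X p * G p) =
      ∑ p ∈ ttildeSupport e, coeff e (X p * G p) :=
    coeff_seriesSum_eq_sum fun p hp => coeff_X_mul_of_eq_zero
      (Finsupp.notMem_support_iff.1 fun h => hp (Finset.mem_insert_of_mem h)) _
  have hshift (p : ℕ × Fin N) :
      (if p.1 = 1 ∧ p.2 = 0 then 1 else 0) * G p = if p = (1, 0) then G p else 0 := by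
    simp [Prod.ext_iff]
  have h1 : (1, 0) ∈ ttildeSupport e := Finset.mem_insert_self _ _
  simp only [map_sub, hX, coeff_ttildeSum _ (subset_refl (ttildeSupport e)), ttilde, sub_mul,
    Finset.sum_sub_distrib, hshift, ← map_sum, Finset.sum_ite_eq', h1, if_true]

theorem ttildeSum_eq_seriesSum_X_succ_mul_sub {G : ℕ × Fin N → R N} (hG : ∀ α, G (0, α) = 0) :
    ttildeSum G = seriesSum N (fun p => X (p.1 + 1, p.2) * G (p.1 + 1, p.2)) - G (1, 0) := by
  have hinj : Function.Injective fun p : ℕ × Fin N => (p.1 + 1, p.2) := fun p q h => by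
    simpa [Prod.ext_iff] using h
  rw [ttildeSum_eq_seriesSum_X_mul_sub,
    ← seriesSum_comp_of_injective hinj (f := fun p => X p * G p)]
  rintro ⟨_ | n, α⟩ hp
  · simp [hG]
  · exact absurd ⟨(n, α), rfl⟩ hp

end DilatonShiftedSums

section StringEquation

variable {N : ℕ} {η : Matrix (Fin N) (Fin N) ℚ} {F : ℕ → R N} {g h : ℕ}

/-- The quadratic term `½ δ_{h,0} Σ η_{αβ} t_0^α t_0^β` of the string equation, as a family of
potentials indexed by the genus `h`, so that it has brackets of its own. -/
noncomputable def stringQuadratic (η : Matrix (Fin N) (Fin N) ℚ) (h : ℕ) : R N :=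
  if h = 0 then
    C (1 / 2) * ∑ α : Fin N, ∑ β : Fin N, C (η α β) * X ((0 : ℕ), α) * X ((0 : ℕ), β)
  else 0

theorem pderiv_X_zero (n : ℕ) (a β : Fin N) :
    MvPowerSeries.pderiv ℚ (n, a) (X ((0 : ℕ), β) : R N) = if n = 0 ∧ β = a then 1 else 0 := by
  simp [MvPowerSeries.pderiv_X, Pi.single_apply, eq_comm]

theorem pderiv_stringQuadratic (hη : ∀ α β, η α β = η β α) (i : ℕ × Fin N) :
    MvPowerSeries.pderiv ℚ i (stringQuadratic η h) =
      if h = 0 ∧ i.1 = 0 then ∑ β, C (η i.2 β) * X ((0 : ℕ), β) else 0 := by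
  obtain ⟨n, a⟩ := i
  obtain rfl | hh := eq_or_ne h 0
  · obtain rfl | hn := eq_or_ne n 0
    · have hsum : MvPowerSeries.pderiv ℚ (0, a)
          (∑ α, ∑ β, C (η α β) * X ((0 : ℕ), α) * X ((0 : ℕ), β) : R N) =
            ∑ β, C (η a β) * X ((0 : ℕ), β) + ∑ β, C (η a β) * X ((0 : ℕ), β) := by
        simp only [map_sum, Derivation.leibniz, MvPowerSeries.pderiv_C, pderiv_X_zero, true_and,
          add_zero, smul_eq_mul, mul_ite, mul_one, mul_zero, Finset.sum_add_distrib,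
          Finset.sum_ite_eq', Finset.mem_univ, if_true]
        rw [Finset.sum_comm (f := fun α β => if α = a then _ else _)]
        simp only [Finset.sum_ite_eq', Finset.mem_univ, if_true, hη _ a, mul_comm]
      simp only [stringQuadratic, and_self, if_true, ← smul_eq_C_mul, Derivation.map_smul] at hsum ⊢
      rw [hsum, smul_add, ← add_smul, add_halves, one_smul]
    · simp [stringQuadratic, hn, pderiv_X_zero]
  · simp [stringQuadratic, hh]

theorem bracket_stringQuadratic_pair (hη : ∀ α β, η α β = η β α) (k n : ℕ) (a x : Fin N) :
    Bracket N (stringQuadratic η) h [((k : ℤ), a), ((n : ℤ), x)] =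
      if h = 0 ∧ k = 0 ∧ n = 0 then C (η a x) else 0 := by
  rw [bracket_natCast_cons, bracket_singleton, pderiv_stringQuadratic hη]
  by_cases hn : h = 0 ∧ n = 0
  · simp only [hn, and_true, true_and, if_true, map_sum, Derivation.leibniz, MvPowerSeries.pderiv_C,
      pderiv_X_zero, add_zero, smul_eq_mul, mul_ite, mul_one, mul_zero]
    by_cases hk : k = 0 <;> simp [hk, hη x a]
  · rw [if_neg hn, map_zero, if_neg fun hkn => hn ⟨hkn.1, hkn.2.2⟩]

theorem bracket_stringQuadratic_succ_cons (hη : ∀ α β, η α β = η β α) (n : ℕ) (a : Fin N)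
    (L : List (ℤ × Fin N)) :
    Bracket N (stringQuadratic η) h ((((n + 1 : ℕ) : ℤ), a) :: L) = 0 := by
  rw [← bracket_append_singleton]
  refine bracket_append_eq_zero ?_ L
  rw [bracket_singleton, pderiv_stringQuadratic hη, if_neg (by simp)]

theorem bracket_stringQuadratic_cons_cons_cons (hη : ∀ α β, η α β = η β α) (u v w : ℕ × Fin N)
    (L : List (ℕ × Fin N)) :
    Bracket N (stringQuadratic η) h (coordList N (u :: v :: w :: L)) = 0 := by
  have hperm : (coordList N (u :: v :: w :: L)).Perm (coordList N L ++ coordList N [u, v, w]) :=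
    List.perm_append_comm (l₁ := coordList N [u, v, w])
  rw [bracket_perm hperm]
  refine bracket_append_eq_zero ?_ _
  simp only [coordList, List.map_cons, List.map_nil]
  rw [bracket_natCast_cons, bracket_stringQuadratic_pair hη]
  split_ifs <;> simp

variable [NeZero N]

theorem StringEqHyp.ttildeSum_bracket_singleton (hs : StringEqHyp N η F g) (hh : h ≤ g) :
    ttildeSum (fun p => Bracket N F h [((p.1 : ℤ) - 1, p.2)]) = -stringQuadratic η h := by
  have hsucc (p : ℕ × Fin N) :
      Bracket N F h [(((p.1 + 1 : ℕ) : ℤ) - 1, p.2)] = pderiv N p (F h) := by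
    simp [Bracket]
  rw [ttildeSum_eq_seriesSum_X_succ_mul_sub fun α => bracket_cons_of_neg F h (by simp) α []]
  have hdilaton : Bracket N F h [(((1 : ℕ) : ℤ) - 1, 0)] = pderiv N (0, 0) (F h) := hsucc (0, 0)
  simp only [hsucc, hdilaton, hs h hh, stringQuadratic]
  ring

theorem StringEqHyp.ttildeSum_bracket_append (hs : StringEqHyp N η F g) (hh : h ≤ g)
    (L : List (ℕ × Fin N)) :
    ttildeSum (fun p => Bracket N F h (coordList N L ++ [((p.1 : ℤ) - 1, p.2)])) =
      -∑ i ∈ Finset.range L.length, Bracket N F h (lowerAt N (coordList N L) i) -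
        Bracket N (stringQuadratic η) h (coordList N L) := by
  induction L with
  | nil => simpa [coordList, Bracket] using hs.ttildeSum_bracket_singleton hh
  | cons v L ih =>
    obtain ⟨n, a⟩ := v
    have hderiv := pderiv_ttildeSum (n, a) fun p =>
      Bracket N F h (coordList N L ++ [((p.1 : ℤ) - 1, p.2)])
    rw [ih, bracket_append_singleton] at hderiv
    simp only [map_sub, map_neg, map_sum, ← bracket_natCast_cons] at hderiv
    rw [coordList_cons, List.length_cons, ← length_coordList L, sum_lowerAt_cons, length_coordList]
    simp only [List.cons_append]
    linear_combination -hderiv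

theorem StringEqHyp.ttildeSum_bracket_cons_append (hs : StringEqHyp N η F g) (hh : h ≤ g) (n : ℕ)
    (a : Fin N) (L : List (ℕ × Fin N)) :
    ttildeSum (fun p =>
        Bracket N F h (((n : ℤ), a) :: (coordList N L ++ [((p.1 : ℤ) - 1, p.2)]))) =
      -Bracket N F h ((n - 1, a) :: coordList N L) -
        ∑ i ∈ Finset.range L.length,
          Bracket N F h (((n : ℤ), a) :: lowerAt N (coordList N L) i) -
        Bracket N (stringQuadratic η) h (((n : ℤ), a) :: coordList N L) := by
  have hinsert := hs.ttildeSum_bracket_append hh ((n, a) :: L)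
  rw [coordList_cons, List.length_cons, ← length_coordList L, sum_lowerAt_cons, length_coordList,
    neg_add'] at hinsert
  exact hinsert

end StringEquation

section Psi

variable {N : ℕ} {η ηinv : Matrix (Fin N) (Fin N) ℚ} {F : ℕ → R N} {g : ℕ}

/-- The quadratic convolution
`Σ_{k ≤ m} Σ_{g₁ + g₂ = g} Σ_{α, β} (-1)^k η^{αβ} A_{g₁, k, α} B_{g₂, m - k, β}`, as an `R`-linear
map of the family `A` that carries the sign. -/
noncomputable def metricConvolution (ηinv : Matrix (Fin N) (Fin N) ℚ) (g m : ℕ)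
    (B : ℕ → ℕ → Fin N → R N) : (ℕ → ℕ → Fin N → R N) →ₗ[R N] R N where
  toFun A := ∑ k ∈ Finset.range (m + 1), ∑ g1 ∈ Finset.range (g + 1), ∑ α : Fin N, ∑ β : Fin N,
    (-1 : R N) ^ k * C (ηinv α β) * A g1 k α * B (g - g1) (m - k) β
  map_add' A A' := by simp [mul_add, add_mul, Finset.sum_add_distrib]
  map_smul' c A := by
    simp only [Pi.smul_apply, smul_eq_mul, RingHom.id_apply, Finset.mul_sum]
    refine Finset.sum_congr rfl fun k _ => Finset.sum_congr rfl fun g1 _ =>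
      Finset.sum_congr rfl fun α _ => Finset.sum_congr rfl fun β _ => ?_
    ring

theorem metricConvolution_apply (m : ℕ) (A B : ℕ → ℕ → Fin N → R N) :
    metricConvolution ηinv g m B A =
      ∑ k ∈ Finset.range (m + 1), ∑ g1 ∈ Finset.range (g + 1), ∑ α : Fin N, ∑ β : Fin N,
        (-1 : R N) ^ k * C (ηinv α β) * A g1 k α * B (g - g1) (m - k) β :=
  rfl

theorem metricConvolution_congr (m : ℕ) {A A' : ℕ → ℕ → Fin N → R N} (B : ℕ → ℕ → Fin N → R N)
    (hA : ∀ h ≤ g, A h = A' h) :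
    metricConvolution ηinv g m B A = metricConvolution ηinv g m B A' := by
  rw [metricConvolution_apply, metricConvolution_apply]
  refine Finset.sum_congr rfl fun k _ => Finset.sum_congr rfl fun g1 hg1 => ?_
  rw [hA g1 (Finset.mem_range_succ_iff.1 hg1)]

theorem metricConvolution_succ_of_zero (m : ℕ) {A : ℕ → ℕ → Fin N → R N}
    (B : ℕ → ℕ → Fin N → R N) (hA : ∀ h α, A h 0 α = 0) :
    metricConvolution ηinv g (m + 1) B A =
      -metricConvolution ηinv g m B fun h k => A h (k + 1) := by
  rw [metricConvolution_apply, Finset.sum_range_succ', metricConvolution_apply]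
  simp [hA, pow_succ, ← Finset.sum_neg_distrib]

theorem metricConvolution_metric (hη : ∀ α β, η α β = η β α) (hinv : η * ηinv = 1) (m : ℕ)
    (B : ℕ → ℕ → Fin N → R N) (x : Fin N) :
    metricConvolution ηinv g m B (fun h k α => if h = 0 ∧ k = 0 then C (η α x) else 0) =
      B g m x := by
  have hcontract (β : Fin N) : ∑ α, C (ηinv α β) * C (η α x) = (if x = β then 1 else 0 : R N) := by
    have h : ∑ α, ηinv α β * η α x = (η * ηinv) x β := by
      simp only [Matrix.mul_apply, hη _ x, mul_comm]
    simp only [← map_mul, ← map_sum, h, hinv, Matrix.one_apply]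
    split_ifs <;> simp
  rw [metricConvolution_apply,
    Finset.sum_eq_single_of_mem 0 (by simp) fun k _ hk => by simp [hk],
    Finset.sum_eq_single_of_mem 0 (by simp) fun h _ hh => by simp [hh], Finset.sum_comm]
  simp [← Finset.sum_mul, hcontract]

theorem metricConvolution_ttildeSum [NeZero N] (m : ℕ)
    (A : ℕ → ℕ → Fin N → ℕ × Fin N → R N) (B : ℕ → ℕ → Fin N → R N) :
    metricConvolution ηinv g m B (fun h k α => ttildeSum (A h k α)) =
      ttildeSum fun p => metricConvolution ηinv g m B fun h k α => A h k α p := by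
  simp only [metricConvolution_apply, ttildeSum_sum, ttildeSum_mul_right, ttildeSum_mul_left]

/-- The quadratic part of `Ψ`, with separate potentials `G` and `F` for its first and second
bracket. -/
noncomputable def psiConvolution (ηinv : Matrix (Fin N) (Fin N) ℚ) (G F : ℕ → R N) (g m : ℕ)
    (Ws Vs : List (ℤ × Fin N)) : R N :=
  metricConvolution ηinv g m (fun h n β => Bracket N F h (((n : ℤ), β) :: Vs))
    fun h k α => Bracket N G h (((k : ℤ), α) :: Ws)

theorem psiConvolution_stringQuadratic_cons (hη : ∀ α β, η α β = η β α) (hinv : η * ηinv = 1)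
    (m : ℕ) (w : ℕ × Fin N) (Ws : List (ℕ × Fin N)) (Vs : List (ℤ × Fin N)) :
    psiConvolution ηinv (stringQuadratic η) F g m (coordList N (w :: Ws)) Vs =
      if w.1 = 0 ∧ Ws = [] then Bracket N F g ((m, w.2) :: Vs) else 0 := by
  obtain ⟨n, x⟩ := w
  cases Ws with
  | nil =>
    simp only [psiConvolution, coordList, List.map_cons, List.map_nil,
      bracket_stringQuadratic_pair hη]
    obtain rfl | hn := eq_or_ne n 0
    · simpa using metricConvolution_metric hη hinv m
        (fun h n β => Bracket N F h (((n : ℤ), β) :: Vs)) x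
    · simp only [hn, and_false, false_and, if_false]
      exact map_zero (metricConvolution ηinv g m _)
  | cons w' Ws =>
    have hzero (h k : ℕ) (α : Fin N) : Bracket N (stringQuadratic η) h
        (((k : ℤ), α) :: coordList N ((n, x) :: w' :: Ws)) = 0 :=
      bracket_stringQuadratic_cons_cons_cons hη (k, α) (n, x) w' Ws
    simp only [psiConvolution, hzero, reduceCtorEq, and_false, if_false]
    exact map_zero (metricConvolution ηinv g m _)

variable [NeZero N]

/-- The linear part of `Ψ` attached to the slot `L`, which is nonzero only if `L` has at most one
entry: `δ_{r,0} Σ t̃_n^α ⟨⟨τ_{n+m+1}(γ_α) L'⟩⟩_g + δ_{r,1} ⟨⟨τ_{m+1}(L) L'⟩⟩_g` for `r` the length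
of `L`. -/
noncomputable def psiBoundary (F : ℕ → R N) (g m : ℕ) : (L L' : List (ℤ × Fin N)) → R N
  | [], L' => ttildeSum fun p => Bracket N F g (((p.1 : ℤ) + m + 1, p.2) :: L')
  | [a], L' => Bracket N F g ((a.1 + m + 1, a.2) :: L')
  | _ :: _ :: _, _ => 0

theorem psiBoundary_of_two_le_length (m : ℕ) {L : List (ℤ × Fin N)} (hL : 2 ≤ L.length)
    (L' : List (ℤ × Fin N)) : psiBoundary F g m L L' = 0 := by
  match L with
  | _ :: _ :: _ => rfl

theorem Psi_eq_psiConvolution_psiBoundary (m : ℕ) (Ws Vs : List (ℤ × Fin N)) :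
    Psi N ηinv F g m Ws Vs =
      psiConvolution ηinv F F g m Ws Vs - psiBoundary F g m Ws Vs +
        (-1) ^ (m + 1) * psiBoundary F g m Vs Ws := by
  match Ws, Vs with
  | [], [] | [], [_] | [], _ :: _ :: _ | [_], [] | [_], [_] | [_], _ :: _ :: _
  | _ :: _ :: _, [] | _ :: _ :: _, [_] | _ :: _ :: _, _ :: _ :: _ =>
    simp only [Psi, bracket_append_singleton]
    rfl

theorem sum_psiBoundary_lowerAt (m : ℕ) (w : ℤ × Fin N) (Ws Vs : List (ℤ × Fin N)) :
    ∑ i ∈ Finset.range (Ws.length + 1), psiBoundary F g (m + 1) (lowerAt N (w :: Ws) i) Vs =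
      psiBoundary F g m (w :: Ws) Vs := by
  cases Ws with
  | nil =>
    simp only [List.length_nil, zero_add, Finset.sum_range_one, lowerAt_cons_zero, psiBoundary]
    congr 3
    push_cast
    ring
  | cons w' Ws =>
    refine Finset.sum_eq_zero fun i _ => psiBoundary_of_two_le_length _ ?_ _
    simp [length_lowerAt]

theorem StringEqHyp.ttildeSum_psiBoundary (hs : StringEqHyp N η F g)
    (hη : ∀ α β, η α β = η β α) (m : ℕ) (Ws Vs : List (ℕ × Fin N)) :
    ttildeSum (fun p => psiBoundary F g (m + 1) (coordList N Vs)
        (coordList N Ws ++ [((p.1 : ℤ) - 1, p.2)])) =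
      -psiBoundary F g m (coordList N Vs) (coordList N Ws) -
        ∑ i ∈ Finset.range Ws.length,
          psiBoundary F g (m + 1) (coordList N Vs) (lowerAt N (coordList N Ws) i) := by
  have hinsert (v : ℕ × Fin N) :
      ttildeSum (fun p => Bracket N F g
          (((v.1 : ℤ) + (m + 1 : ℕ) + 1, v.2) :: (coordList N Ws ++ [((p.1 : ℤ) - 1, p.2)]))) =
        -Bracket N F g (((v.1 : ℤ) + m + 1, v.2) :: coordList N Ws) -
          ∑ i ∈ Finset.range Ws.length, Bracket N F g
            (((v.1 : ℤ) + (m + 1 : ℕ) + 1, v.2) :: lowerAt N (coordList N Ws) i) := by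
    have hlevel := hs.ttildeSum_bracket_cons_append le_rfl (v.1 + m + 1 + 1) v.2 Ws
    rw [bracket_stringQuadratic_succ_cons hη, sub_zero] at hlevel
    push_cast at hlevel ⊢
    rw [add_sub_cancel_right] at hlevel
    simpa only [add_assoc] using hlevel
  match Vs with
  | [] =>
    simp only [coordList_nil, psiBoundary]
    rw [ttildeSum_comm, ← ttildeSum_sum, ← map_neg, ← map_sub]
    exact congrArg ttildeSum (funext fun q => hinsert q)
  | [v] => exact hinsert v
  | _ :: _ :: _ =>
    simp only [coordList, List.map_cons, psiBoundary, neg_zero, Finset.sum_const_zero, sub_zero]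
    exact map_zero ttildeSum

theorem StringEqHyp.ttildeSum_psiConvolution (hs : StringEqHyp N η F g) (m : ℕ)
    (Ws : List (ℕ × Fin N)) (Vs : List (ℤ × Fin N)) :
    ttildeSum (fun p => psiConvolution ηinv F F g (m + 1)
        (coordList N Ws ++ [((p.1 : ℤ) - 1, p.2)]) Vs) =
      psiConvolution ηinv F F g m (coordList N Ws) Vs -
        ∑ i ∈ Finset.range Ws.length,
          psiConvolution ηinv F F g (m + 1) (lowerAt N (coordList N Ws) i) Vs -
        psiConvolution ηinv (stringQuadratic η) F g (m + 1) (coordList N Ws) Vs := by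
  let shifted : ℕ → ℕ → Fin N → R N := fun h k α =>
    Bracket N F h (((k : ℤ) - 1, α) :: coordList N Ws)
  let lowered : ℕ → ℕ → ℕ → Fin N → R N := fun i h k α =>
    Bracket N F h (((k : ℤ), α) :: lowerAt N (coordList N Ws) i)
  let quadratic : ℕ → ℕ → Fin N → R N := fun h k α =>
    Bracket N (stringQuadratic η) h (((k : ℤ), α) :: coordList N Ws)
  let B : ℕ → ℕ → Fin N → R N := fun h n β => Bracket N F h (((n : ℤ), β) :: Vs)
  have hinsert : ∀ h ≤ g, (fun (k : ℕ) (α : Fin N) => ttildeSum fun p =>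
      Bracket N F h (((k : ℤ), α) :: (coordList N Ws ++ [((p.1 : ℤ) - 1, p.2)]))) =
        (-shifted - ∑ i ∈ Finset.range Ws.length, lowered i - quadratic) h := by
    intro h hh
    funext k α
    simp only [hs.ttildeSum_bracket_cons_append hh, Pi.sub_apply, Pi.neg_apply, Finset.sum_apply,
      shifted, lowered, quadratic]
  have hshift : metricConvolution ηinv g (m + 1) B shifted =
      -psiConvolution ηinv F F g m (coordList N Ws) Vs := by
    rw [metricConvolution_succ_of_zero m B fun h α => bracket_cons_of_neg F h (by simp) α _]
    simp only [shifted, Nat.cast_succ, add_sub_cancel_right]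
    rfl
  calc ttildeSum (fun p => psiConvolution ηinv F F g (m + 1)
        (coordList N Ws ++ [((p.1 : ℤ) - 1, p.2)]) Vs)
      = metricConvolution ηinv g (m + 1) B
          (-shifted - ∑ i ∈ Finset.range Ws.length, lowered i - quadratic) :=
        (metricConvolution_ttildeSum _ _ B).symm.trans (metricConvolution_congr _ B hinsert)
    _ = _ := by
        rw [map_sub, map_sub, map_neg, map_sum, hshift, neg_neg]
        rfl

/-- `Psi` does not vanish at `τ_{-1}(γ_x)`, although its brackets do: the boundary term raises
`τ_{-1}` to `τ_m`. -/
theorem Psi_singleton_neg_one (m : ℕ) (x : Fin N) (Vs : List (ℤ × Fin N)) :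
    Psi N ηinv F g m [(-1, x)] Vs = -Bracket N F g ((m, x) :: Vs) := by
  have hzero (h : ℕ) (a : ℤ × Fin N) : Bracket N F h [a, (-1, x)] = 0 :=
    bracket_append_eq_zero (bracket_cons_of_neg F h (by simp) x []) [a]
  have hboundary : psiBoundary F g m Vs [(-1, x)] = 0 := by
    match Vs with
    | [] =>
      simp only [psiBoundary, hzero]
      exact map_zero ttildeSum
    | [v] => exact hzero g (v.1 + m + 1, v.2)
    | _ :: _ :: _ => rfl
  have hconvolution : psiConvolution ηinv F F g m [(-1, x)] Vs = 0 := by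
    simp only [psiConvolution, hzero]
    exact map_zero (metricConvolution ηinv g m _)
  rw [Psi_eq_psiConvolution_psiBoundary, hboundary, hconvolution]
  simp [psiBoundary]

end Psi

theorem psi_two_string_primary_general {N : ℕ} [NeZero N] (η ηinv : Matrix (Fin N) (Fin N) ℚ)
    (hηsymm : ∀ α β, η α β = η β α) (hinv : η * ηinv = 1) (g : ℕ) (F : ℕ → R N)
    (hstring : StringEqHyp N η F g) (m : ℕ) (w : ℕ × Fin N) (Ws Vs : List (ℕ × Fin N)) :
    PsiS N ηinv F g (m + 1) (coordList N (w :: Ws)) (coordList N Vs) =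
      -Psi N ηinv F g m (coordList N (w :: Ws)) (coordList N Vs) +
        ∑ i ∈ Finset.range (Ws.length + 1),
          Psi N ηinv F g (m + 1) (lowerAt N (coordList N (w :: Ws)) i) (coordList N Vs) +
        if w.1 = 0 ∧ Ws = [] then Bracket N F g (((m + 1 : ℕ), w.2) :: coordList N Vs) else 0 := by
  have hinsert : PsiS N ηinv F g (m + 1) (coordList N (w :: Ws)) (coordList N Vs) =
      -(ttildeSum (fun p => psiConvolution ηinv F F g (m + 1)
          (coordList N (w :: Ws) ++ [((p.1 : ℤ) - 1, p.2)]) (coordList N Vs)) +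
        (-1) ^ (m + 1 + 1) * ttildeSum (fun p => psiBoundary F g (m + 1) (coordList N Vs)
          (coordList N (w :: Ws) ++ [((p.1 : ℤ) - 1, p.2)]))) := by
    rw [← ttildeSum_mul_left, ← map_add]
    refine congrArg (-ttildeSum ·) (funext fun p => ?_)
    rw [Psi_eq_psiConvolution_psiBoundary, psiBoundary_of_two_le_length, sub_zero]
    · rfl
    · simp [coordList]
  have hhead := sum_psiBoundary_lowerAt (F := F) (g := g) m (w.1, w.2) (coordList N Ws)
    (coordList N Vs)
  rw [length_coordList, ← coordList_cons] at hhead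
  rw [hinsert, hstring.ttildeSum_psiConvolution, hstring.ttildeSum_psiBoundary hηsymm,
    psiConvolution_stringQuadratic_cons hηsymm hinv]
  simp only [Psi_eq_psiConvolution_psiBoundary, Finset.sum_add_distrib, Finset.sum_sub_distrib,
    ← Finset.mul_sum, List.length_cons, hhead]
  ring

/-- For `s ≥ 0`, `m ≥ 1`, a primary coordinate entry `W = τ_0(γ_x)` and
coordinate entries `V_1, …, V_s`:
`Ψ_{2,s,g,m}(W S | V) = −Ψ_{1,s,g,m−1}(W | V)`. -/
theorem psi_two_string_primary (N : ℕ) [NeZero N]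
    (η ηinv : Matrix (Fin N) (Fin N) ℚ)
    (hηsymm : ∀ α β, η α β = η β α)
    (hinv : η * ηinv = 1) (hinv' : ηinv * η = 1)
    (g : ℕ) (F : ℕ → R N) (hstring : StringEqHyp N η F g)
    (s m : ℕ) (hm : 1 ≤ m)
    (x : Fin N) (Vs : List (ℕ × Fin N)) (hVs : Vs.length = s) :
    PsiS N ηinv F g m [((0 : ℤ), x)] (coordList N Vs) =
      - Psi N ηinv F g (m - 1) [((0 : ℤ), x)] (coordList N Vs) := by
  obtain ⟨m, rfl⟩ := Nat.exists_eq_add_of_le' hm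
  simpa [coordList, lowerAt, Psi_singleton_neg_one] using
    psi_two_string_primary_general η ηinv hηsymm hinv g F hstring m (0, x) [] Vs

end GWBigPhase
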